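/- Let n ≥ 3 be an integer, φ₀ > 0, and let φ : I → ℝ be a smooth positive function on an open interval I containing 0 satisfying φ''(s) = (n-1)(1+φ'(s)²)/φ(s), φ(0) = φ₀, φ'(0) = 0. Define the radial Laplacian Δf(s) = (1+φ'(s)²)^{-1/2}·φ(s)^{1-n}·d/ds[(1+φ'(s)²)^{-1/2}·φ(s)^{n-1}·f'(s)], set ψ(s) = (n(n-1))^{1/2}·φ₀^{n-1}·φ(s)^{-n}, and let u(s) = ψ(s)^{(n-2)/n}. Then u > 0 everywhere on I and Δu(s) + ((n-2)/n)·ψ(s)²·u(s) = 0 for all s ∈ I. -/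

import Mathlib

/-!
The catenoid equation has the first integral `(1 + φ'²) φ^(-2(n-1)) = φ₀^(-2(n-1))`: its derivative
vanishes along solutions, and the initial data give the constant (`catenoid_first_integral`).
Consequently `(1 + φ'²)^(-1/2) = φ₀^(n-1) φ^(-(n-1))` (`catenoid_rpow_eq`), so the flux
`(1 + φ'²)^(-1/2) φ^(n-1) u'` in the radial Laplacian is just `φ₀^(n-1) u'`.

Since `ψ` is a constant times `φ^(-n)`, the function `u` is `C φ^(-(n-2))` for some `C > 0`, and the
catenoid equation gives `u'' = -C (n-1)(n-2) φ^(-n)` (`catenoid_deriv_deriv`), the terms in `φ'²`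
cancelling. Hence `Δu = -(n-1)(n-2) φ₀^(2(n-1)) C φ^(2-3n) = -((n-2)/n) ψ² u`.

In the auxiliary lemmas the dimension is `n = m + 2`.
-/

/-- The Laplace–Beltrami operator of the catenoid metric
`g = (1+φ'²)ds² + φ²·g_{S^{n-1}}` acting on rotationally symmetric functions `f = f(s)`:
`Δf = (1+φ'²)^(-1/2)·φ^(1-n)·((1+φ'²)^(-1/2)·φ^(n-1)·f')'`. -/
noncomputable def radialLaplacian (n : ℕ) (φ : ℝ → ℝ) (f : ℝ → ℝ) : ℝ → ℝ :=
  fun s =>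
    (1 + (deriv φ s) ^ 2) ^ (-(1 / 2 : ℝ)) * (φ s) ^ ((1 : ℤ) - n) *
      deriv (fun t =>
        (1 + (deriv φ t) ^ 2) ^ (-(1 / 2 : ℝ)) * (φ t) ^ ((n : ℤ) - 1) * deriv f t) s

theorem catenoid_hasDerivAt {I : Set ℝ} (hIopen : IsOpen I) {φ : ℝ → ℝ}
    (hsmooth : ContDiffOn ℝ (⊤ : ℕ∞) φ I) {s : ℝ} (hs : s ∈ I) :
    HasDerivAt φ (deriv φ s) s ∧ HasDerivAt (deriv φ) (deriv (deriv φ) s) s := by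
  have h2 : ContDiffOn ℝ (1 + 1 : ℕ) φ I := contDiffOn_infty.1 hsmooth (1 + 1)
  have hd : ContDiffOn ℝ 1 (deriv φ) I := by
    refine h2.deriv_of_isOpen hIopen ?_
    norm_cast
  have hnhds := hIopen.mem_nhds hs
  exact ⟨((h2.differentiableOn (by norm_num)).differentiableAt hnhds).hasDerivAt,
    ((hd.differentiableOn (by norm_num)).differentiableAt hnhds).hasDerivAt⟩

theorem catenoid_first_integral (m : ℕ) {I : Set ℝ} (hIopen : IsOpen I) (hIconv : Convex ℝ I)
    (h0I : (0 : ℝ) ∈ I) {φ : ℝ → ℝ}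
    (hsmooth : ContDiffOn ℝ (⊤ : ℕ∞) φ I) (hpos : ∀ s ∈ I, 0 < φ s)
    (hode : ∀ s ∈ I, deriv (deriv φ) s = ((m : ℝ) + 1) * (1 + (deriv φ s) ^ 2) / φ s)
    (hinit' : deriv φ 0 = 0) {s : ℝ} (hs : s ∈ I) :
    1 + (deriv φ s) ^ 2 = (φ s ^ (m + 1) / φ 0 ^ (m + 1)) ^ 2 := by
  have hder : ∀ t ∈ I,
      HasDerivAt (fun t => (1 + (deriv φ t) ^ 2) / (φ t ^ (m + 1)) ^ 2) 0 t := by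
    intro t ht
    obtain ⟨h1, h2⟩ := catenoid_hasDerivAt hIopen hsmooth ht
    have hp := hpos t ht
    have hne : (φ t ^ (m + 1)) ^ 2 ≠ 0 := by positivity
    refine (((h2.fun_pow 2).const_add 1).fun_div ((h1.fun_pow (m + 1)).fun_pow 2) hne).congr_deriv ?_
    rw [hode t ht]
    simp only [Nat.add_sub_cancel]
    push_cast
    field_simp
    ring
  have hconst := hIopen.is_const_of_deriv_eq_zero hIconv.isPreconnected
    (fun t ht => (hder t ht).differentiableAt.differentiableWithinAt)
    (fun t ht => (hder t ht).deriv) hs h0I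
  have hp := hpos s hs
  have hp0 := hpos 0 h0I
  simp only [hinit'] at hconst
  field_simp at hconst ⊢
  linarith

theorem catenoid_rpow_eq (m : ℕ) {I : Set ℝ} (hIopen : IsOpen I) (hIconv : Convex ℝ I)
    (h0I : (0 : ℝ) ∈ I) {φ : ℝ → ℝ}
    (hsmooth : ContDiffOn ℝ (⊤ : ℕ∞) φ I) (hpos : ∀ s ∈ I, 0 < φ s)
    (hode : ∀ s ∈ I, deriv (deriv φ) s = ((m : ℝ) + 1) * (1 + (deriv φ s) ^ 2) / φ s)
    (hinit' : deriv φ 0 = 0) {s : ℝ} (hs : s ∈ I) :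
    (1 + (deriv φ s) ^ 2) ^ (-(1 / 2 : ℝ)) = φ 0 ^ (m + 1) / φ s ^ (m + 1) := by
  have hp := hpos s hs
  have hp0 := hpos 0 h0I
  rw [catenoid_first_integral m hIopen hIconv h0I hsmooth hpos hode hinit' hs,
    Real.rpow_neg (by positivity), ← Real.sqrt_eq_rpow, Real.sqrt_sq (by positivity), inv_div]

theorem catenoid_deriv_power (m : ℕ) (C : ℝ) {I : Set ℝ} (hIopen : IsOpen I) {φ : ℝ → ℝ}
    (hsmooth : ContDiffOn ℝ (⊤ : ℕ∞) φ I) (hpos : ∀ s ∈ I, 0 < φ s) {s : ℝ} (hs : s ∈ I) :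
    HasDerivAt (fun t => C / φ t ^ m) (-(m * C) * (deriv φ s / φ s ^ (m + 1))) s := by
  have hp := hpos s hs
  refine ((hasDerivAt_const s C).fun_div ((catenoid_hasDerivAt hIopen hsmooth hs).1.fun_pow m)
    (by positivity)).congr_deriv ?_
  cases m with
  | zero => simp
  | succ k =>
    simp only [Nat.add_sub_cancel]
    push_cast
    field_simp
    ring

/-- The derivative of `φ' / φ^(m+1)`, a multiple of `(φ^(-m))'`; the catenoid equation cancels all
terms in `φ'²`. -/
theorem catenoid_deriv_deriv (m : ℕ) {I : Set ℝ} (hIopen : IsOpen I) {φ : ℝ → ℝ}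
    (hsmooth : ContDiffOn ℝ (⊤ : ℕ∞) φ I) (hpos : ∀ s ∈ I, 0 < φ s)
    (hode : ∀ s ∈ I, deriv (deriv φ) s = ((m : ℝ) + 1) * (1 + (deriv φ s) ^ 2) / φ s)
    {s : ℝ} (hs : s ∈ I) :
    HasDerivAt (fun t => deriv φ t / φ t ^ (m + 1)) (((m : ℝ) + 1) / φ s ^ (m + 2)) s := by
  have hp := hpos s hs
  obtain ⟨h1, h2⟩ := catenoid_hasDerivAt hIopen hsmooth hs
  refine (h2.fun_div (h1.fun_pow (m + 1)) (by positivity)).congr_deriv ?_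
  rw [hode s hs]
  simp only [Nat.add_sub_cancel]
  push_cast
  field_simp
  ring

/-- **(2/n)-stability of the catenoid via a positive Jacobi-type solution.**
Let `φ` be a smooth positive solution of the catenoid ODE on an open interval `I`
containing `0` with `φ 0 = φ₀ > 0`, `φ' 0 = 0`, set
`ψ = (n(n-1))^(1/2)·φ₀^(n-1)·φ^(-n)` (the norm `|A|` of the second fundamental form),
and let `u = ψ^((n-2)/n)`.  Then `u > 0` on `I` and `Δu + ((n-2)/n)·ψ²·u = 0` on `I`. -/
theorem catenoid_two_over_n_stable
    (n : ℕ) (hn : 3 ≤ n) (φ₀ : ℝ) (hφ₀ : 0 < φ₀)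
    (I : Set ℝ) (hIopen : IsOpen I) (hIconv : Convex ℝ I) (h0I : (0 : ℝ) ∈ I)
    (φ : ℝ → ℝ)
    (hsmooth : ContDiffOn ℝ (⊤ : ℕ∞) φ I)
    (hpos : ∀ s ∈ I, 0 < φ s)
    (hode : ∀ s ∈ I, deriv (deriv φ) s = ((n : ℝ) - 1) * (1 + (deriv φ s) ^ 2) / φ s)
    (hinit : φ 0 = φ₀) (hinit' : deriv φ 0 = 0)
    (ψ : ℝ → ℝ)
    (hψ : ψ = fun s => Real.sqrt ((n : ℝ) * ((n : ℝ) - 1)) * φ₀ ^ (n - 1) * (φ s) ^ (-(n : ℤ)))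
    (u : ℝ → ℝ)
    (hu : u = fun s => (ψ s) ^ (((n : ℝ) - 2) / (n : ℝ))) :
    ∀ s ∈ I,
      0 < u s ∧
      radialLaplacian n φ u s + (((n : ℝ) - 2) / (n : ℝ)) * (ψ s) ^ 2 * u s = 0 := by
  obtain ⟨m, rfl⟩ : ∃ m, n = m + 2 := ⟨n - 2, by omega⟩
  subst hinit
  have hode' : ∀ s ∈ I, deriv (deriv φ) s = ((m : ℝ) + 1) * (1 + (deriv φ s) ^ 2) / φ s := by
    intro s hs
    rw [hode s hs]
    push_cast
    ring
  set A : ℝ := Real.sqrt (((m + 2 : ℕ) : ℝ) * (((m + 2 : ℕ) : ℝ) - 1)) * φ 0 ^ (m + 1) with hA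
  have hrad : 0 < ((m + 2 : ℕ) : ℝ) * (((m + 2 : ℕ) : ℝ) - 1) := by
    push_cast
    have : (0 : ℝ) ≤ m := m.cast_nonneg
    nlinarith
  have hApos : 0 < A := mul_pos (Real.sqrt_pos.2 hrad) (by positivity)
  have hAsq : A ^ 2 = ((m : ℝ) + 2) * (m + 1) * (φ 0 ^ (m + 1)) ^ 2 := by
    rw [hA, mul_pow, Real.sq_sqrt hrad.le]
    push_cast
    ring
  have hψ' : ∀ t, ψ t = A / φ t ^ (m + 2) := by
    intro t
    rw [hψ]
    simp only [zpow_neg, zpow_natCast, div_eq_mul_inv]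
    rfl
  set C : ℝ := A ^ ((((m + 2 : ℕ) : ℝ) - 2) / ((m + 2 : ℕ) : ℝ)) with hC
  have hCpos : 0 < C := Real.rpow_pos_of_pos hApos _
  have hu' : ∀ t ∈ I, u t = C / φ t ^ m := by
    intro t ht
    have hp := hpos t ht
    rw [hu]
    simp only [hψ' t]
    rw [Real.div_rpow hApos.le (by positivity), ← hC, ← Real.rpow_natCast (φ t) (m + 2),
      ← Real.rpow_mul hp.le, mul_div_cancel₀ _ (by positivity), ← Real.rpow_natCast (φ t) m]
    push_cast
    ring_nf
  have hderu : ∀ t ∈ I, deriv u t = -(m * C) * (deriv φ t / φ t ^ (m + 1)) := by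
    intro t ht
    refine ((catenoid_deriv_power m C hIopen hsmooth hpos ht).congr_of_eventuallyEq ?_).deriv
    filter_upwards [hIopen.mem_nhds ht] with x hx using hu' x hx
  intro s hs
  have hp := hpos s hs
  refine ⟨by rw [hu' s hs]; positivity, ?_⟩
  -- By the first integral, the flux is `φ₀^(n-1) u'` near `s`.
  have hflux : deriv (fun t => (1 + (deriv φ t) ^ 2) ^ (-(1 / 2 : ℝ)) *
        (φ t) ^ (((m + 2 : ℕ) : ℤ) - 1) * deriv u t) s
      = φ 0 ^ (m + 1) * (-(m * C)) * (((m : ℝ) + 1) / φ s ^ (m + 2)) := by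
    refine (((catenoid_deriv_deriv m hIopen hsmooth hpos hode' hs).const_mul
      (φ 0 ^ (m + 1) * (-(m * C)))).congr_of_eventuallyEq ?_).deriv
    filter_upwards [hIopen.mem_nhds hs] with x hx
    have hpx := hpos x hx
    have hexp : ((m + 2 : ℕ) : ℤ) - 1 = ((m + 1 : ℕ) : ℤ) := by push_cast; ring
    rw [catenoid_rpow_eq m hIopen hIconv h0I hsmooth hpos hode' hinit' hx, hderu x hx, hexp,
      zpow_natCast]
    field_simp
  have hexp : (1 : ℤ) - ((m + 2 : ℕ) : ℤ) = -((m + 1 : ℕ) : ℤ) := by push_cast; ring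
  unfold radialLaplacian
  rw [hflux, catenoid_rpow_eq m hIopen hIconv h0I hsmooth hpos hode' hinit' hs, hu' s hs, hψ' s,
    div_pow, hAsq, hexp, zpow_neg, zpow_natCast]
  push_cast
  field_simp
  ring
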